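/- arXiv:1001.3802 — 2 statements merged into one kernel-verified Lean document; each statement's English description precedes it below -/
import Mathlib

section
/- Let (Ω, 𝒢) be a measurable space, P a probability measure on 𝒢, and (F_t)_{t∈[0,1]} a filtration of sub-σ-algebras of 𝒢. Let (F̄ᴾ_t)_{t∈[0,1]} be the augmented filtration, where F̄ᴾ_t is the σ-algebra generated by F_t together with all P-null sets of 𝒢. If X : [0,1] × Ω → ℝ is progressively measurable with respect to (F̄ᴾ_t), then there exists a process X̃ : [0,1] × Ω → ℝ that is progressively measurable with respect to (F_t) and satisfies X̃ = X (Lebesgue ⊗ P)-almost everywhere on [0,1] × Ω; X̃ is unique up to (Lebesgue ⊗ P)-null sets. Moreover, if for P-almost every ω the path t ↦ X_t(ω) is continuous, then X̃ can be chosen so that for P-almost every ω the path t ↦ X̃_t(ω) is continuous. -/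
open MeasureTheory

/-- The `P`-augmentation of a filtration on `[0,1]`: each `F t` is enlarged by the
σ-algebra generated by the `P`-null sets of the ambient σ-algebra. -/
def augFiltration {Ω : Type*} {𝒢 : MeasurableSpace Ω} (P : Measure Ω)
    (F : Filtration unitInterval 𝒢) : Filtration unitInterval 𝒢 where
  seq t := F t ⊔ MeasurableSpace.generateFrom {N : Set Ω | MeasurableSet[𝒢] N ∧ P N = 0}
  mono' := fun _ _ hst => sup_le_sup_right (F.mono hst) _
  le' := fun t => sup_le (F.le t)
    (MeasurableSpace.generateFrom_le fun _ hs => hs.1)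

/-- Lebesgue measure on the unit interval, as a measure on the subtype `[0,1]`. -/
noncomputable def lebIcc : Measure unitInterval :=
  (volume : Measure ℝ).comap Subtype.val

/-!
Two elementary facts combine. First, at a fixed time the augmentation does not matter: an
`F̄ᴾ_t`-measurable variable agrees almost surely with an `F_t`-measurable one. Since this costs a
null set per time, it may be used at countably many times only. Second, freezing an adapted process
`W` at the last point `ρ t ≤ t` of a countable grid gives a progressive process `t ↦ W (ρ t)`, which
involves only the countably many variables `W s` with `s` in the grid; a pointwise limit of such
processes along finer and finer grids is still progressive.

If `X` has left-continuous paths, `X (ρ t) → X t` as the grid is refined. In general, `X` may be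
taken bounded and real-valued after composition with a measurable embedding; its averages over
`[t - h, t]` are then adapted, and by Lebesgue differentiation their values at `ρ t` tend to `X t`
for almost every `t` when `h` is the mesh of the grid.
-/

open Filter Topology TopologicalSpace

theorem ae_eq_prod_of_ae_ae_eq {α β E : Type*} [MeasurableSpace α] [MeasurableSpace β]
    {μ : Measure α} {ν : Measure β} [SFinite μ] [SFinite ν] [TopologicalSpace E] [MetrizableSpace E]
    {f g : α × β → E} (hf : StronglyMeasurable f) (hg : StronglyMeasurable g)
    (hfg : ∀ᵐ y ∂ν, ∀ᵐ x ∂μ, f (x, y) = g (x, y)) : f =ᵐ[μ.prod ν] g :=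
  have hmeas : MeasurableSet {p | f p = g p} := hf.measurableSet_eq_fun hg
  (Measure.ae_prod_iff_ae_ae hmeas).2 ((Measure.ae_ae_comm hmeas).2 hfg)

section Modification

variable {α E : Type*} [TopologicalSpace E] [IsCompletelyMetrizableSpace E] [Nonempty E]

theorem exists_stronglyMeasurable_eventuallyEq {m : MeasurableSpace α} {l : Filter α}
    [CountableInterFilter l] {f : α → E}
    (hf : StronglyMeasurable[eventuallyMeasurableSpace m l] f) :
    ∃ g : α → E, StronglyMeasurable[m] g ∧ f =ᶠ[l] g := by
  classical
  induction f, hf using StronglyMeasurable.induction' with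
  | const c => exact ⟨fun _ => c, stronglyMeasurable_const, .rfl⟩
  | @pcw f₁ f₂ s _ _ hs ih₁ ih₂ =>
    obtain ⟨g₁, hg₁, hfg₁⟩ := ih₁
    obtain ⟨g₂, hg₂, hfg₂⟩ := ih₂
    obtain ⟨t, ht, hst⟩ := hs
    refine ⟨t.piecewise g₁ g₂, hg₁.piecewise ht hg₂, ?_⟩
    filter_upwards [hfg₁, hfg₂, hst.mem_iff] with x hx₁ hx₂ hx
    simp only [Set.piecewise, hx, hx₁, hx₂]
  | @lim f f_lim _ _ ih hlim =>
    choose g hg hfg using ih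
    refine ⟨fun x => limUnder atTop (g · x), .limUnder hg, ?_⟩
    filter_upwards [eventually_countable_forall.2 hfg] with x hx
    have hgx : Tendsto (g · x) atTop (𝓝 (f_lim x)) := (hlim x).congr hx
    exact hgx.limUnder_eq.symm

end Modification

theorem augFiltration_le_eventuallyMeasurableSpace {Ω : Type*} {𝒢 : MeasurableSpace Ω}
    (P : Measure Ω) (F : Filtration unitInterval 𝒢) (t : unitInterval) :
    augFiltration P F t ≤ eventuallyMeasurableSpace (F t) (ae P) :=
  sup_le le_eventuallyMeasurableSpace <| MeasurableSpace.generateFrom_le fun _ hN =>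
    ⟨∅, @MeasurableSet.empty _ (F t), ae_eq_empty.2 hN.2⟩

section Progressive

variable {ι Ω E : Type*} [Preorder ι] [MeasurableSpace ι] {𝒢 : MeasurableSpace Ω}
  {F : Filtration ι 𝒢} [TopologicalSpace E]

theorem stronglyMeasurable_uncurry_of_isStronglyProgressive [OrderTop ι]
    {X : ι → Ω → E} (hX : IsStronglyProgressive F X) :
    StronglyMeasurable fun p : ι × Ω => X p.1 p.2 :=
  have hincl : Measurable[_, Subtype.instMeasurableSpace.prod (F ⊤)]
      fun p : ι × Ω => ((⟨p.1, le_top⟩ : Set.Iic (⊤ : ι)), p.2) :=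
    measurable_fst.subtype_mk.prodMk (measurable_snd.mono le_rfl (F.le ⊤))
  (hX ⊤).comp_measurable hincl

theorem isStronglyProgressive_comp_of_countable_range [MeasurableSingletonClass ι]
    [PseudoMetrizableSpace E] {Y : ι → Ω → E} (hY : StronglyAdapted F Y) {ρ : ι → ι}
    (hρ : Measurable ρ) (hρ_countable : (Set.range ρ).Countable) (hρ_le : ∀ t, ρ t ≤ t) :
    IsStronglyProgressive F fun t => Y (ρ t) := by
  intro i
  let S := Set.range ρ ∩ Set.Iic i
  have : Countable S := (hρ_countable.mono Set.inter_subset_left).to_subtype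
  let : MeasurableSpace Ω := F i
  let : TopologicalSpace S := ⊥
  have : DiscreteTopology S := ⟨rfl⟩
  have hYS : StronglyMeasurable fun p : S × Ω => Y p.1 p.2 :=
    stronglyMeasurable_uncurry_of_continuous_of_stronglyMeasurable (u := fun s : S => Y s)
      (fun _ => continuous_of_discreteTopology) fun s => (hY s).mono (F.mono s.2.2)
  have hρS : Measurable fun p : Set.Iic i × Ω =>
      ((⟨ρ p.1, ⟨p.1, rfl⟩, (hρ_le p.1).trans p.1.2⟩ : S), p.2) :=
    ((hρ.comp (measurable_subtype_coe.comp measurable_fst)).subtype_mk).prodMk measurable_snd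
  exact hYS.comp_measurable hρS

theorem isStronglyProgressive_limUnder [IsCompletelyMetrizableSpace E] [Nonempty E]
    {X : ℕ → ι → Ω → E} (hX : ∀ n, IsStronglyProgressive F (X n)) :
    IsStronglyProgressive F fun t ω => limUnder atTop fun n => X n t ω := fun i =>
  letI := F i
  .limUnder fun n => hX n i

theorem exists_isStronglyProgressive_eq_of_tendsto [MeasurableSingletonClass ι]
    [IsCompletelyMetrizableSpace E] [Nonempty E] {P : Measure Ω} {W : ℕ → ι → Ω → E}
    (hW : ∀ n t, StronglyMeasurable[eventuallyMeasurableSpace (F t) (ae P)] (W n t))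
    {ρ : ℕ → ι → ι} (hρ : ∀ n, Measurable (ρ n))
    (hρ_countable : ∀ n, (Set.range (ρ n)).Countable) (hρ_le : ∀ n t, ρ n t ≤ t) :
    ∃ X : ι → Ω → E, IsStronglyProgressive F X ∧ ∀ᵐ ω ∂P, ∀ t x,
      Tendsto (fun n => W n (ρ n t) ω) atTop (𝓝 x) → X t ω = x := by
  choose Y hY hWY using fun n t => exists_stronglyMeasurable_eventuallyEq (hW n t)
  refine ⟨_, isStronglyProgressive_limUnder fun n =>
    isStronglyProgressive_comp_of_countable_range (hY n) (hρ n) (hρ_countable n) (hρ_le n), ?_⟩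
  have hgrid : ∀ᵐ ω ∂P, ∀ n, ∀ s ∈ Set.range (ρ n), W n s ω = Y n s ω :=
    ae_all_iff.2 fun n => (ae_ball_iff (hρ_countable n)).2 fun s _ => hWY n s
  filter_upwards [hgrid] with ω hω t x hx
  have hYx : Tendsto (fun n => Y n (ρ n t) ω) atTop (𝓝 x) :=
    hx.congr fun n => hω n _ ⟨t, rfl⟩
  exact hYx.limUnder_eq

end Progressive

section Grid

/-- The largest point of the grid `{k / (n + 1) | k ∈ ℕ}` that is at most `t`, for times
`t ∈ [0,1]`. -/
noncomputable def gridFloor (n : ℕ) (t : unitInterval) : unitInterval :=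
  Set.projIcc 0 1 zero_le_one (⌊((n : ℝ) + 1) * t⌋₊ / (n + 1))

theorem natFloor_mul_div_le {𝕜 : Type*} [Field 𝕜] [LinearOrder 𝕜] [IsStrictOrderedRing 𝕜]
    [FloorSemiring 𝕜] {a b : 𝕜} (ha : 0 < a) (hb : 0 ≤ b) : ⌊a * b⌋₊ / a ≤ b := by
  rw [div_le_iff₀' ha]
  exact Nat.floor_le (by positivity)

theorem coe_gridFloor (n : ℕ) (t : unitInterval) :
    (gridFloor n t : ℝ) = ⌊((n : ℝ) + 1) * t⌋₊ / (n + 1) := by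
  have hle : (⌊((n : ℝ) + 1) * t⌋₊ : ℝ) / (n + 1) ≤ t :=
    natFloor_mul_div_le (by positivity) t.2.1
  rw [gridFloor, Set.projIcc_of_mem _ ⟨by positivity, hle.trans t.2.2⟩]

theorem gridFloor_le (n : ℕ) (t : unitInterval) : gridFloor n t ≤ t := by
  rw [← Subtype.coe_le_coe, coe_gridFloor]
  exact natFloor_mul_div_le (by positivity) t.2.1

theorem le_gridFloor_add (n : ℕ) (t : unitInterval) : (t : ℝ) ≤ gridFloor n t + 1 / (n + 1) := by
  rw [coe_gridFloor, ← add_div, le_div_iff₀' (by positivity)]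
  exact (Nat.lt_floor_add_one _).le

theorem measurable_gridFloor (n : ℕ) : Measurable (gridFloor n) := by
  have hfloor : Measurable fun t : unitInterval => (⌊((n : ℝ) + 1) * t⌋₊ : ℝ) / (n + 1) := by
    fun_prop
  exact continuous_projIcc.measurable.comp hfloor

theorem countable_range_gridFloor (n : ℕ) : (Set.range (gridFloor n)).Countable := by
  refine (Set.countable_range fun k : ℕ =>
    Set.projIcc (0 : ℝ) 1 zero_le_one (k / (n + 1))).mono ?_
  rintro _ ⟨t, rfl⟩
  exact ⟨⌊((n : ℝ) + 1) * t⌋₊, rfl⟩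

theorem tendsto_gridFloor (t : unitInterval) :
    Tendsto (fun n => gridFloor n t) atTop (𝓝[≤] t) := by
  refine tendsto_nhdsWithin_iff.2 ⟨?_, .of_forall fun n => gridFloor_le n t⟩
  have hlower : Tendsto (fun n : ℕ => (t : ℝ) - 1 / (n + 1)) atTop (𝓝 t) := by
    simpa only [sub_zero] using
      (tendsto_one_div_add_atTop_nhds_zero_nat (𝕜 := ℝ)).const_sub (t : ℝ)
  exact tendsto_subtype_rng.2 <| tendsto_of_tendsto_of_tendsto_of_le_of_le hlower
    tendsto_const_nhds (fun n => sub_le_iff_le_add.2 (le_gridFloor_add n t))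
    fun n => gridFloor_le n t

end Grid

section PastAverage

variable {V : Type*} [NormedAddCommGroup V] [NormedSpace ℝ V]

/-- The average over `[t - h, t]` of a path `x` on `[0,1]`, which is continued by the constants
`x 0` and `x 1` outside `[0,1]`. It is meaningful for `0 < h` only. -/
noncomputable def pastAverage (x : unitInterval → V) (h : ℝ) (t : unitInterval) : V :=
  ⨍ s in Set.Icc ((t : ℝ) - h) t, Set.IccExtend zero_le_one x s

theorem stronglyAdapted_pastAverage {Ω : Type*} {𝒢 : MeasurableSpace Ω}
    {F : Filtration unitInterval 𝒢} {X : unitInterval → Ω → V} (hX : IsStronglyProgressive F X)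
    (h : ℝ) : StronglyAdapted F fun t ω => pastAverage (X · ω) h t := by
  intro t
  let : MeasurableSpace Ω := F t
  have hproj : Measurable fun s : ℝ => Set.projIic t (Set.projIcc (0 : ℝ) 1 zero_le_one s) :=
    (measurable_const.min continuous_projIcc.measurable).subtype_mk
  have hstopped : StronglyMeasurable fun p : ℝ × Ω =>
      X (Set.projIic t (Set.projIcc (0 : ℝ) 1 zero_le_one p.1)) p.2 :=
    (hX t).comp_measurable (hproj.prodMap measurable_id)
  have havg (ω : Ω) : pastAverage (X · ω) h t = ⨍ s in Set.Icc ((t : ℝ) - h) t,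
      X (Set.projIic t (Set.projIcc (0 : ℝ) 1 zero_le_one s)) ω := by
    refine setAverage_congr_fun measurableSet_Icc (.of_forall fun s hs => ?_)
    have hst : Set.projIcc (0 : ℝ) 1 zero_le_one s ≤ t := by
      simpa only [Set.projIcc_val] using Set.monotone_projIcc zero_le_one hs.2
    exact congrArg (X · ω) (min_eq_right hst).symm
  simp only [havg]
  exact hstopped.integral_prod_left'

theorem ae_tendsto_setAverage_Icc_sub [CompleteSpace V] {f : ℝ → V}
    (hf : LocallyIntegrable f) :
    ∀ᵐ t, ∀ s h : ℕ → ℝ, Tendsto h atTop (𝓝[>] 0) → (∀ n, t ∈ Set.Icc (s n) (s n + h n)) →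
      Tendsto (fun n => ⨍ u in Set.Icc (s n - h n) (s n), f u) atTop (𝓝 (f t)) := by
  filter_upwards [IsUnifLocDoublingMeasure.ae_tendsto_average volume hf 3]
    with t ht s h hh hst
  have hball (n : ℕ) : Set.Icc (s n - h n) (s n) = Metric.closedBall (s n - h n / 2) (h n / 2) := by
    rw [Real.Icc_eq_closedBall]
    congr 1 <;> ring
  simp only [hball]
  refine ht _ _ ?_ (.of_forall fun n => ?_)
  · rw [tendsto_nhdsWithin_iff] at hh ⊢
    exact ⟨by simpa only [zero_div] using hh.1.div_const 2,
      hh.2.mono fun n hn => half_pos (Set.mem_Ioi.1 hn)⟩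
  · rw [Real.closedBall_eq_Icc]
    constructor <;> linarith [(hst n).1, (hst n).2]

theorem ae_tendsto_pastAverage_gridFloor [CompleteSpace V] {x : unitInterval → V}
    (hx : StronglyMeasurable x) {C : ℝ} (hC : ∀ t, ‖x t‖ ≤ C) :
    ∀ᵐ t, Tendsto (fun n : ℕ => pastAverage x (1 / (n + 1)) (gridFloor n t)) atTop (𝓝 (x t)) := by
  have hx_ext : StronglyMeasurable (Set.IccExtend zero_le_one x : ℝ → V) :=
    hx.comp_measurable continuous_projIcc.measurable
  have hloc : LocallyIntegrable (Set.IccExtend zero_le_one x : ℝ → V) :=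
    (locallyIntegrable_const C).mono hx_ext.aestronglyMeasurable <|
      .of_forall fun s => (hC _).trans (Real.le_norm_self C)
  have hmesh : Tendsto (fun n : ℕ => 1 / ((n : ℝ) + 1)) atTop (𝓝[>] 0) :=
    tendsto_nhdsWithin_iff.2
      ⟨tendsto_one_div_add_atTop_nhds_zero_nat,
        .of_forall fun _ => Set.mem_Ioi.2 Nat.one_div_pos_of_nat⟩
  have hdiff := unitInterval.measurePreserving_coe.quasiMeasurePreserving.ae
    (ae_restrict_of_ae (ae_tendsto_setAverage_Icc_sub hloc))
  filter_upwards [hdiff] with t ht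
  have hlim := ht (fun n => gridFloor n t) _ hmesh
    fun n => ⟨gridFloor_le n t, le_gridFloor_add n t⟩
  rwa [Set.IccExtend_val] at hlim

end PastAverage

section Version

variable {Ω E : Type*} {𝒢 : MeasurableSpace Ω} {P : Measure Ω} {F : Filtration unitInterval 𝒢}
  [TopologicalSpace E]

theorem exists_isStronglyProgressive_indistinguishable_of_leftContinuous
    [IsCompletelyMetrizableSpace E] [Nonempty E] {X : unitInterval → Ω → E}
    (hX : StronglyAdapted (augFiltration P F) X)
    (hcont : ∀ᵐ ω ∂P, ∀ t, ContinuousWithinAt (X · ω) (Set.Iic t) t) :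
    ∃ X' : unitInterval → Ω → E, IsStronglyProgressive F X' ∧ ∀ᵐ ω ∂P, ∀ t, X' t ω = X t ω := by
  obtain ⟨X', hX', hlim⟩ := exists_isStronglyProgressive_eq_of_tendsto (W := fun _ => X)
    (fun _ t => (hX t).mono (augFiltration_le_eventuallyMeasurableSpace P F t))
    measurable_gridFloor countable_range_gridFloor gridFloor_le
  refine ⟨X', hX', ?_⟩
  filter_upwards [hlim, hcont] with ω hω hcω t
  exact hω t _ ((hcω t).tendsto.comp (tendsto_gridFloor t))

theorem ae_eq_prod_of_isStronglyProgressive [SFinite P] [MetrizableSpace E]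
    {X X' : unitInterval → Ω → E} (hX : IsStronglyProgressive (augFiltration P F) X)
    (hX' : IsStronglyProgressive F X') (h : ∀ᵐ ω ∂P, ∀ᵐ t, X' t ω = X t ω) :
    (fun p : unitInterval × Ω => X' p.1 p.2) =ᵐ[volume.prod P] fun p => X p.1 p.2 :=
  ae_eq_prod_of_ae_ae_eq (stronglyMeasurable_uncurry_of_isStronglyProgressive hX')
    (stronglyMeasurable_uncurry_of_isStronglyProgressive hX) h

theorem exists_isStronglyProgressive_ae_eq_of_bounded {V : Type*} [NormedAddCommGroup V]
    [NormedSpace ℝ V] [CompleteSpace V] [SFinite P] {X : unitInterval → Ω → V}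
    (hX : IsStronglyProgressive (augFiltration P F) X) {C : ℝ} (hC : ∀ t ω, ‖X t ω‖ ≤ C) :
    ∃ X' : unitInterval → Ω → V, IsStronglyProgressive F X' ∧
      (fun p : unitInterval × Ω => X' p.1 p.2) =ᵐ[volume.prod P] fun p => X p.1 p.2 := by
  obtain ⟨X', hX', hlim⟩ := exists_isStronglyProgressive_eq_of_tendsto
    (W := fun n t ω => pastAverage (X · ω) (1 / (n + 1)) t)
    (fun n t => (stronglyAdapted_pastAverage hX _ t).mono
      (augFiltration_le_eventuallyMeasurableSpace P F t))
    measurable_gridFloor countable_range_gridFloor gridFloor_le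
  refine ⟨X', hX', ae_eq_prod_of_isStronglyProgressive hX hX' ?_⟩
  filter_upwards [hlim] with ω hω
  have hpath : StronglyMeasurable (X · ω) :=
    (stronglyMeasurable_uncurry_of_isStronglyProgressive hX).comp_measurable measurable_prodMk_right
  filter_upwards [ae_tendsto_pastAverage_gridFloor hpath fun t => hC t ω] with t ht
  exact hω t _ ht

theorem exists_isStronglyProgressive_ae_eq [PolishSpace E] [Nonempty E] [SFinite P]
    {X : unitInterval → Ω → E} (hX : IsStronglyProgressive (augFiltration P F) X) :
    ∃ X' : unitInterval → Ω → E, IsStronglyProgressive F X' ∧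
      (fun p : unitInterval × Ω => X' p.1 p.2) =ᵐ[volume.prod P] fun p => X p.1 p.2 := by
  borelize E
  let φ : E → ℝ := Subtype.val ∘ unitInterval.sigmoid ∘ embeddingReal E
  have hφ : MeasurableEmbedding φ :=
    (MeasurableEmbedding.subtype_coe measurableSet_Icc).comp
      (measurableEmbedding_sigmoid_comp_embeddingReal E)
  obtain ⟨ψ, hψ, hψφ⟩ := hφ.exists_measurable_extend measurable_id fun _ => ‹Nonempty E›
  have hφ_bdd (x : E) : ‖φ x‖ ≤ 1 :=
    (Real.norm_of_nonneg (unitInterval.nonneg _)).trans_le (unitInterval.le_one _)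
  obtain ⟨Z, hZ, hZX⟩ := exists_isStronglyProgressive_ae_eq_of_bounded
    (X := fun t ω => φ (X t ω))
    (fun i => (hφ.measurable.comp (hX i).measurable).stronglyMeasurable) fun t ω => hφ_bdd (X t ω)
  refine ⟨fun t ω => ψ (Z t ω), fun i => (hψ.comp (hZ i).measurable).stronglyMeasurable, ?_⟩
  filter_upwards [hZX] with p hp
  rw [hp]
  exact congrFun hψφ (X p.1 p.2)

end Version

theorem stmt_1_general {Ω E : Type*} {𝒢 : MeasurableSpace Ω} [TopologicalSpace E] [PolishSpace E]
    [Nonempty E] {P : Measure Ω} [SFinite P] {F : Filtration unitInterval 𝒢}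
    {X : unitInterval → Ω → E} (hX : IsStronglyProgressive (augFiltration P F) X) :
    (∃ X' : unitInterval → Ω → E, IsStronglyProgressive F X' ∧
        (fun p : unitInterval × Ω => X' p.1 p.2) =ᵐ[lebIcc.prod P] fun p => X p.1 p.2) ∧
      (∀ X₁ X₂ : unitInterval → Ω → E,
        ((fun p : unitInterval × Ω => X₁ p.1 p.2) =ᵐ[lebIcc.prod P] fun p => X p.1 p.2) →
        ((fun p : unitInterval × Ω => X₂ p.1 p.2) =ᵐ[lebIcc.prod P] fun p => X p.1 p.2) →
        (fun p : unitInterval × Ω => X₁ p.1 p.2) =ᵐ[lebIcc.prod P] fun p => X₂ p.1 p.2) ∧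
      ((∀ᵐ ω ∂P, Continuous fun t => X t ω) →
        ∃ X' : unitInterval → Ω → E, IsStronglyProgressive F X' ∧
          ((fun p : unitInterval × Ω => X' p.1 p.2) =ᵐ[lebIcc.prod P] fun p => X p.1 p.2) ∧
          ∀ᵐ ω ∂P, Continuous fun t => X' t ω) := by
  refine ⟨exists_isStronglyProgressive_ae_eq hX, fun _ _ h₁ h₂ => h₁.trans h₂.symm,
    fun hcont => ?_⟩
  obtain ⟨X', hX', heq⟩ := exists_isStronglyProgressive_indistinguishable_of_leftContinuous
    hX.stronglyAdapted (hcont.mono fun ω hω t => hω.continuousWithinAt)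
  refine ⟨X', hX', ae_eq_prod_of_isStronglyProgressive hX hX' ?_, ?_⟩
  · exact heq.mono fun ω hω => .of_forall hω
  · filter_upwards [heq, hcont] with ω hω hcω
    simpa only [hω] using hcω

/-- a process progressively measurable for the `P`-augmented filtration admits
an `(F_t)`-progressively measurable version, unique up to `Lebesgue ⊗ P`-null sets;
if the original process has `P`-a.s. continuous paths, the version can be chosen with
`P`-a.s. continuous paths as well. -/
theorem stmt_1 {Ω : Type*} [𝒢 : MeasurableSpace Ω]
    (P : Measure Ω) [IsProbabilityMeasure P]
    (F : Filtration unitInterval 𝒢)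
    (X : unitInterval → Ω → ℝ)
    (hX : ProgMeasurable (augFiltration P F) X) :
    (∃ X' : unitInterval → Ω → ℝ, ProgMeasurable F X' ∧
        (fun p : unitInterval × Ω => X' p.1 p.2) =ᵐ[lebIcc.prod P]
          fun p : unitInterval × Ω => X p.1 p.2) ∧
      (∀ X₁ X₂ : unitInterval → Ω → ℝ, ProgMeasurable F X₁ → ProgMeasurable F X₂ →
        ((fun p : unitInterval × Ω => X₁ p.1 p.2) =ᵐ[lebIcc.prod P]
          fun p : unitInterval × Ω => X p.1 p.2) →
        ((fun p : unitInterval × Ω => X₂ p.1 p.2) =ᵐ[lebIcc.prod P]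
          fun p : unitInterval × Ω => X p.1 p.2) →
        ((fun p : unitInterval × Ω => X₁ p.1 p.2) =ᵐ[lebIcc.prod P]
          fun p : unitInterval × Ω => X₂ p.1 p.2)) ∧
      ((∀ᵐ ω ∂P, Continuous fun t : unitInterval => X t ω) →
        ∃ X' : unitInterval → Ω → ℝ, ProgMeasurable F X' ∧
          ((fun p : unitInterval × Ω => X' p.1 p.2) =ᵐ[lebIcc.prod P]
            fun p : unitInterval × Ω => X p.1 p.2) ∧
          ∀ᵐ ω ∂P, Continuous fun t : unitInterval => X' t ω) := by
  obtain ⟨hexists, hunique, hcont⟩ := stmt_1_general hX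
  exact ⟨hexists, fun X₁ X₂ _ _ => hunique X₁ X₂, hcont⟩
end

section
/- Let (Ω, 𝒢, P) be a probability space with a filtration (F_t)_{t∈[0,1]}. For i = 1, 2, let M₀^i be F₀-measurable with E[(M₀^i)²] < ∞; let N^i be a martingale with respect to (F_t) under P with continuous paths, N₀^i = 0, and E[(N_t^i)²] < ∞ for all t; let K^i be (F_t)-adapted with continuous nondecreasing paths, K₀^i = 0, and E[(K₁^i)²] < ∞; set M^i_t := M₀^i + N^i_t − K^i_t and assume E[ sup_{t∈[0,1]} (M^i_t)² ] < ∞. Write δM := M¹ − M², δN := N¹ − N², δK := K¹ − K². Then there exists a universal constant C (independent of the probability space, the filtration and the processes) such that E[(δN₁)²] + E[ sup_{t∈[0,1]} (δK_t)² ] ≤ C · ( E[ sup_{t∈[0,1]} (δM_t)² ] + ( E[ sup_{t∈[0,1]} (δM_t)² ] )^{1/2} · ( ( E[(K₁¹)²] )^{1/2} + ( E[(K₁²)²] )^{1/2} ) ). -/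
open MeasureTheory

/-!
Put `N = δN`, `X = δM` and `V = δK`, so that `N - X = V - X₀` is continuous of finite variation.
Along a partition, `N₁²` expands as
`N₀² + X₁² - X₀² + 2 ∑ X_{k+1} ΔV_k + ∑ (ΔV_k)² + 2 ∑ (N_k - X_k) ΔN_k`.
The last sum is a martingale transform and has mean zero, the sum of the `(ΔV_k)²` vanishes as the
mesh tends to zero, and `|∑ X_{k+1} ΔV_k| ≤ sup |X| (K¹₁ + K²₁)` is handled by Cauchy-Schwarz.
The supremum of `V = X₀ + N - X` then follows from Doob's `L²` inequality for `N`, itself a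
consequence of a pathwise inequality whose error term is again a martingale transform.
-/

section

open Filter Topology

section Paths

lemma sign_mul_sub_le_abs_sub_abs (a b : ℝ) : SignType.sign a * (b - a) ≤ |b| - |a| := by
  have h : SignType.sign a * b ≤ |b| := by
    rcases lt_trichotomy a 0 with ha | rfl | ha
    · simpa [sign_neg ha] using neg_le_abs b
    · simp
    · simpa [sign_pos ha] using le_abs_self b
  rw [mul_sub, sign_mul_self]
  exact sub_le_sub_right h _

lemma monotone_sign_cast : Monotone fun a : ℝ => (SignType.sign a : ℝ) := by
  have hcast : Monotone fun s : SignType => (s : ℝ) := by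
    intro s t hst
    cases s <;> cases t <;> first | exact absurd hst (by decide) | norm_num
  exact hcast.comp SignType.sign.monotone

/-- The running maximum of `|x|`, carrying the sign of the current value: the integrand of the
pathwise form of Doob's `L²` inequality. -/
noncomputable def signedRunningMax (x : ℕ → ℝ) (k : ℕ) : ℝ :=
  SignType.sign (x k) * partialSups (fun j => |x j|) k

lemma abs_signedRunningMax_le (x : ℕ → ℝ) (k : ℕ) :
    |signedRunningMax x k| ≤ partialSups (fun j => |x j|) k := by
  have hmax : 0 ≤ partialSups (fun j => |x j|) k :=
    (abs_nonneg (x k)).trans (le_partialSups (fun j => |x j|) k)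
  rw [signedRunningMax, abs_mul, abs_of_nonneg hmax]
  refine mul_le_of_le_one_left hmax ?_
  cases SignType.sign (x k) <;> simp

lemma sum_signedRunningMax_mul_sub_le (x : ℕ → ℝ) (n : ℕ) :
    ∑ k ∈ Finset.range n, signedRunningMax x k * (x (k + 1) - x k) ≤
      partialSups (fun j => |x j|) n * |x n| - partialSups (fun j => |x j|) n ^ 2 / 2 := by
  induction n with
  | zero => simp; nlinarith [sq_abs (x 0), sq_nonneg (x 0)]
  | succ n ih =>
    have hle : |x n| ≤ partialSups (fun j => |x j|) n := le_partialSups (fun j => |x j|) n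
    have hstep : signedRunningMax x n * (x (n + 1) - x n) ≤
        partialSups (fun j => |x j|) n * (|x (n + 1)| - |x n|) := by
      rw [signedRunningMax, mul_comm (SignType.sign (x n) : ℝ), mul_assoc]
      exact mul_le_mul_of_nonneg_left (sign_mul_sub_le_abs_sub_abs _ _)
        ((abs_nonneg _).trans hle)
    rw [Finset.sum_range_succ, partialSups_add_one]
    rcases le_total (partialSups (fun j => |x j|) n) |x (n + 1)| with h | h
    · rw [sup_eq_right.2 h]; nlinarith
    · rw [sup_eq_left.2 h]; linarith

lemma partialSups_abs_sq_le (x : ℕ → ℝ) (n : ℕ) :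
    partialSups (fun j => |x j|) n ^ 2 ≤
      4 * x n ^ 2 - 4 * ∑ k ∈ Finset.range n, signedRunningMax x k * (x (k + 1) - x k) := by
  nlinarith [sum_signedRunningMax_mul_sub_le x n, sq_abs (x n),
    sq_nonneg (partialSups (fun j => |x j|) n - 2 * |x n|)]

lemma sq_eq_sum_range_mul_sub {R : Type*} [CommRing R] (w x : ℕ → R) (n : ℕ) :
    w n ^ 2 = w 0 ^ 2 + x n ^ 2 - x 0 ^ 2
      + 2 * ∑ k ∈ Finset.range n, x (k + 1) * ((w (k + 1) - x (k + 1)) - (w k - x k))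
      + ∑ k ∈ Finset.range n, ((w (k + 1) - x (k + 1)) - (w k - x k)) ^ 2
      + 2 * ∑ k ∈ Finset.range n, (w k - x k) * (w (k + 1) - w k) := by
  induction n with
  | zero => simp
  | succ n ih =>
    simp only [Finset.sum_range_succ]
    linear_combination ih

lemma sq_le_of_abs_le_of_sum_abs_sub_le {w x : ℕ → ℝ} {s r : ℝ} {n : ℕ} (hx : ∀ k, |x k| ≤ s)
    (hr : ∑ k ∈ Finset.range n, |(w (k + 1) - x (k + 1)) - (w k - x k)| ≤ r) :
    w n ^ 2 ≤ w 0 ^ 2 + s ^ 2 + 2 * (s * r)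
      + ∑ k ∈ Finset.range n, ((w (k + 1) - x (k + 1)) - (w k - x k)) ^ 2
      + 2 * ∑ k ∈ Finset.range n, (w k - x k) * (w (k + 1) - w k) := by
  have hxn : x n ^ 2 ≤ s ^ 2 := sq_le_sq' (abs_le.1 (hx n)).1 (abs_le.1 (hx n)).2
  have hsum :=
    calc ∑ k ∈ Finset.range n, x (k + 1) * ((w (k + 1) - x (k + 1)) - (w k - x k))
        ≤ ∑ k ∈ Finset.range n, s * |(w (k + 1) - x (k + 1)) - (w k - x k)| := by
          refine Finset.sum_le_sum fun k _ => (le_abs_self _).trans ?_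
          rw [abs_mul]
          gcongr
          exact hx _
      _ ≤ s * r := by
          rw [← Finset.mul_sum]
          exact mul_le_mul_of_nonneg_left hr ((abs_nonneg _).trans (hx 0))
  rw [sq_eq_sum_range_mul_sub w x n]
  linarith [sq_nonneg (x 0)]

lemma sum_sq_le_sq_of_sum_abs_le {ι : Type*} {s : Finset ι} {a : ι → ℝ} {r : ℝ}
    (h : ∑ i ∈ s, |a i| ≤ r) : ∑ i ∈ s, a i ^ 2 ≤ r ^ 2 := by
  simp only [← sq_abs (a _)]
  exact (Finset.sum_sq_le_sq_sum_of_nonneg fun i _ => abs_nonneg (a i)).trans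
    (pow_le_pow_left₀ (Finset.sum_nonneg fun i _ => abs_nonneg (a i)) h 2)

end Paths

section Variation

variable {α : Type*} [LinearOrder α]

lemma eVariationOn_sub_le {E : Type*} [SeminormedAddCommGroup E] (f g : α → E) (s : Set α) :
    eVariationOn (fun t => f t - g t) s ≤ eVariationOn f s + eVariationOn g s := by
  refine iSup_le fun ⟨n, u, hu, hus⟩ => ?_
  calc ∑ i ∈ Finset.range n, edist (f (u (i + 1)) - g (u (i + 1))) (f (u i) - g (u i))
      ≤ ∑ i ∈ Finset.range n,
          (edist (f (u (i + 1))) (f (u i)) + edist (g (u (i + 1))) (g (u i))) :=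
        Finset.sum_le_sum fun i _ => by
          simp only [edist_dist, ← ENNReal.ofReal_add dist_nonneg dist_nonneg]
          exact ENNReal.ofReal_le_ofReal (dist_sub_sub_le _ _ _ _)
    _ ≤ eVariationOn f s + eVariationOn g s := by
        rw [Finset.sum_add_distrib]
        exact add_le_add (eVariationOn.sum_le hu hus) (eVariationOn.sum_le hu hus)

lemma sum_abs_sub_le_of_eVariationOn_le {f : α → ℝ} {r : ℝ} (hr : 0 ≤ r)
    (hf : eVariationOn f Set.univ ≤ ENNReal.ofReal r) {τ : ℕ → α} (hτ : Monotone τ) (n : ℕ) :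
    ∑ k ∈ Finset.range n, |f (τ (k + 1)) - f (τ k)| ≤ r := by
  rw [← ENNReal.ofReal_le_ofReal_iff hr, ENNReal.ofReal_sum_of_nonneg fun _ _ => abs_nonneg _]
  simp only [← Real.dist_eq, ← edist_dist]
  exact (eVariationOn.sum_le hτ fun _ => Set.mem_univ _).trans hf

lemma eVariationOn_univ_sub_le_of_monotone {f g : α → ℝ} (hf : Monotone f) (hg : Monotone g)
    {a b : α} (ha : IsBot a) (hb : IsTop b) :
    eVariationOn (fun t => f t - g t) Set.univ ≤ ENNReal.ofReal ((f b - f a) + (g b - g a)) := by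
  have hIcc : Set.univ ∩ Set.Icc a b = Set.univ :=
    Set.eq_univ_of_forall fun t => ⟨trivial, ha t, hb t⟩
  have hvar {h : α → ℝ} (hh : Monotone h) :
      eVariationOn h Set.univ = ENNReal.ofReal (h b - h a) := by
    simpa only [hIcc] using (hh.monotoneOn Set.univ).eVariationOn_eq (Set.mem_univ a)
      (Set.mem_univ b)
  rw [ENNReal.ofReal_add (sub_nonneg.2 (hf (ha b))) (sub_nonneg.2 (hg (ha b))), ← hvar hf,
    ← hvar hg]
  exact eVariationOn_sub_le f g _

lemma tendsto_sum_sq_sub_of_sum_abs_sub_le {β : Type*} [PseudoMetricSpace β] {f : β → ℝ}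
    (hf : UniformContinuous f) {τ : ℕ → ℕ → β} {δ : ℕ → ℝ} (hδ : Tendsto δ atTop (𝓝 0))
    (hτ : ∀ n k, dist (τ n (k + 1)) (τ n k) ≤ δ n) {m : ℕ → ℕ} {r : ℝ}
    (hr : ∀ n, ∑ k ∈ Finset.range (m n), |f (τ n (k + 1)) - f (τ n k)| ≤ r) :
    Tendsto (fun n => ∑ k ∈ Finset.range (m n), (f (τ n (k + 1)) - f (τ n k)) ^ 2)
      atTop (𝓝 0) := by
  have hr0 : 0 ≤ r := (Finset.sum_nonneg fun _ _ => abs_nonneg _).trans (hr 0)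
  rw [Metric.tendsto_nhds]
  intro ε hε
  obtain ⟨η, hη, hfη⟩ := Metric.uniformContinuous_iff.1 hf (ε / (r + 1)) (by positivity)
  filter_upwards [hδ.eventually_lt_const hη] with n hn
  rw [Real.dist_eq, sub_zero, abs_of_nonneg (Finset.sum_nonneg fun _ _ => sq_nonneg _)]
  calc ∑ k ∈ Finset.range (m n), (f (τ n (k + 1)) - f (τ n k)) ^ 2
      ≤ ∑ k ∈ Finset.range (m n), ε / (r + 1) * |f (τ n (k + 1)) - f (τ n k)| := by
        refine Finset.sum_le_sum fun k _ => ?_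
        rw [← sq_abs, sq]
        gcongr
        exact (hfη ((hτ n k).trans_lt hn)).le
    _ ≤ ε / (r + 1) * r := by
        rw [← Finset.mul_sum]
        gcongr
        exact hr n
    _ < ε := by
        rw [div_mul_eq_mul_div, div_lt_iff₀ (by positivity)]
        nlinarith

end Variation

section Grid

/-- The `k`-th point `min (k / (n + 1)) 1` of the uniform partition of `[0, 1]` into `n + 1`
intervals. -/
noncomputable def uniformGrid (n k : ℕ) : unitInterval :=
  Set.Icc.addNSMul (zero_le_one' ℝ) (1 / ((n : ℝ) + 1)) k

lemma monotone_uniformGrid (n : ℕ) : Monotone (uniformGrid n) :=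
  Set.Icc.monotone_addNSMul _ (by positivity)

lemma uniformGrid_zero (n : ℕ) : uniformGrid n 0 = 0 :=
  Subtype.ext (Set.Icc.addNSMul_zero _)

lemma uniformGrid_add_one_self (n : ℕ) : uniformGrid n (n + 1) = 1 := by
  refine Set.projIcc_of_right_le (zero_le_one' ℝ) (le_of_eq ?_)
  simp only [nsmul_eq_mul, Nat.cast_add, Nat.cast_one, zero_add]
  field_simp

lemma dist_uniformGrid_succ_le (n k : ℕ) :
    dist (uniformGrid n (k + 1)) (uniformGrid n k) ≤ 1 / ((n : ℝ) + 1) :=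
  Set.Icc.abs_sub_addNSMul_le _ (by positivity) k
    ⟨monotone_uniformGrid n k.le_succ, le_rfl⟩

lemma exists_dist_uniformGrid_le (n : ℕ) (t : unitInterval) :
    ∃ k ≤ n + 1, dist t (uniformGrid n k) ≤ 1 / ((n : ℝ) + 1) := by
  have hn : (0 : ℝ) < n + 1 := by positivity
  set k := ⌊(t : ℝ) * (n + 1)⌋₊
  have hlower : (k : ℝ) / (n + 1) ≤ t :=
    (div_le_iff₀ hn).2 (Nat.floor_le (mul_nonneg t.2.1 hn.le))
  have hupper : (t : ℝ) ≤ (k + 1) / (n + 1) :=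
    (le_div_iff₀ hn).2 (Nat.lt_floor_add_one _).le
  refine ⟨k, Nat.floor_le_of_le ?_, Set.Icc.abs_sub_addNSMul_le _ (by positivity) _ ⟨?_, ?_⟩⟩
  · push_cast
    exact mul_le_of_le_one_left hn.le t.2.2
  all_goals
    rw [← Set.projIcc_val (zero_le_one' ℝ) t]
    refine Set.monotone_projIcc _ ?_
    simpa only [nsmul_eq_mul, zero_add, mul_one_div, Nat.cast_add, Nat.cast_one]

lemma tendsto_partialSups_uniformGrid {f : unitInterval → ℝ} (hf : Continuous f) :
    Tendsto (fun n => partialSups (fun k => f (uniformGrid n k)) (n + 1)) atTop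
      (𝓝 (⨆ t, f t)) := by
  have hle : ∀ t, f t ≤ ⨆ s, f s := le_ciSup (isCompact_range hf).bddAbove
  obtain ⟨t, -, ht⟩ := isCompact_univ.exists_isMaxOn Set.univ_nonempty hf.continuousOn
  have hmax : ⨆ s, f s = f t := le_antisymm (ciSup_le fun s => ht (Set.mem_univ s)) (hle t)
  choose κ hκ hdist using exists_dist_uniformGrid_le
  have hgrid : Tendsto (fun n => uniformGrid n (κ n t)) atTop (𝓝 t) :=
    tendsto_iff_dist_tendsto_zero.2 <| squeeze_zero (fun _ => dist_nonneg)
      (fun n => (dist_comm _ _).trans_le (hdist n t)) tendsto_one_div_add_atTop_nhds_zero_nat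
  refine tendsto_of_tendsto_of_tendsto_of_le_of_le (hmax ▸ (hf.tendsto t).comp hgrid)
    tendsto_const_nhds (fun n => ?_) fun n => partialSups_le _ _ _ fun _ _ => hle _
  exact le_partialSups_of_le (fun k => f (uniformGrid n k)) (hκ n t)

end Grid
section Probability

variable {Ω : Type*} {m : MeasurableSpace Ω} {P : Measure Ω}

lemma integral_mul_le_sqrt_mul_sqrt {f g : Ω → ℝ} (hf : 0 ≤ᵐ[P] f) (hg : 0 ≤ᵐ[P] g)
    (hf2 : MemLp f 2 P) (hg2 : MemLp g 2 P) :
    ∫ ω, f ω * g ω ∂P ≤ √(∫ ω, f ω ^ 2 ∂P) * √(∫ ω, g ω ^ 2 ∂P) := by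
  simpa [Real.sqrt_eq_rpow] using integral_mul_le_Lp_mul_Lq_of_nonneg
    Real.HolderConjugate.two_two hf hg (by simpa using hf2) (by simpa using hg2)

lemma measurable_partialSups {f : ℕ → Ω → ℝ} {n : ℕ} (hf : ∀ k ≤ n, Measurable (f k)) :
    Measurable fun ω => partialSups (fun k => f k ω) n := by
  induction n with
  | zero => simpa only [partialSups_zero] using hf 0 le_rfl
  | succ n ih =>
    simp only [partialSups_add_one]
    exact (ih fun k hk => hf k (hk.trans n.le_succ)).sup (hf (n + 1) le_rfl)

lemma memLp_partialSups {p : ENNReal} {f : ℕ → Ω → ℝ} (hf : ∀ k, MemLp (f k) p P) (n : ℕ) :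
    MemLp (fun ω => partialSups (fun k => f k ω) n) p P := by
  induction n with
  | zero => simpa only [partialSups_zero] using hf 0
  | succ n ih =>
    simp only [partialSups_add_one]
    exact ih.sup (hf (n + 1))

lemma integral_mul_sub_eq_zero {ι : Type*} [Preorder ι] {F : Filtration ι m}
    [SigmaFiniteFiltration P F] {N : ι → Ω → ℝ} (hN : Martingale N F P) {s t : ι} (hst : s ≤ t)
    {Y : Ω → ℝ} (hY : Measurable[F s] Y) (hint : Integrable (Y * (N t - N s)) P) :
    ∫ ω, Y ω * (N t ω - N s ω) ∂P = 0 := by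
  have hdiff : P[N t - N s | F s] =ᵐ[P] 0 := by
    filter_upwards [condExp_sub (hN.integrable t) (hN.integrable s) (F s),
      hN.condExp_ae_eq hst, hN.condExp_ae_eq (le_refl s)] with ω hsub ht hs
    simp [hsub, ht, hs]
  calc ∫ ω, Y ω * (N t ω - N s ω) ∂P = ∫ ω, P[Y * (N t - N s) | F s] ω ∂P :=
        (integral_condExp (F.le s)).symm
    _ = ∫ _, 0 ∂P := by
        refine integral_congr_ae ?_
        filter_upwards [condExp_mul_of_stronglyMeasurable_left hY.stronglyMeasurable hint
          ((hN.integrable t).sub (hN.integrable s)), hdiff] with ω hmul hzero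
        simp [hmul, hzero]
    _ = 0 := integral_zero _ _

section Discrete

variable {F : Filtration ℕ m}

lemma adapted_signedRunningMax {N : ℕ → Ω → ℝ} (hN : Adapted F N) :
    Adapted F fun k ω => signedRunningMax (fun j => N j ω) k :=
  fun k => (monotone_sign_cast.measurable.comp (hN k)).mul <|
    measurable_partialSups fun j hj => measurable_abs.comp ((hN j).mono (F.mono hj) le_rfl)

lemma memLp_signedRunningMax {p : ENNReal} {N : ℕ → Ω → ℝ} (hN : Adapted F N)
    (hNp : ∀ k, MemLp (N k) p P) (k : ℕ) :
    MemLp (fun ω => signedRunningMax (fun j => N j ω) k) p P :=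
  (memLp_partialSups (fun j => (hNp j).abs) k).mono'
    ((adapted_signedRunningMax hN k).mono (F.le k) le_rfl).aestronglyMeasurable
    (ae_of_all _ fun ω => abs_signedRunningMax_le (fun j => N j ω) k)

variable {N : ℕ → Ω → ℝ}

lemma integrable_sum_mul_sub {Y : ℕ → Ω → ℝ} (hN2 : ∀ k, MemLp (N k) 2 P)
    (hY2 : ∀ k, MemLp (Y k) 2 P) (n : ℕ) :
    Integrable (fun ω => ∑ k ∈ Finset.range n, Y k ω * (N (k + 1) ω - N k ω)) P :=
  integrable_finsetSum _ fun k _ => (hY2 k).integrable_mul ((hN2 (k + 1)).sub (hN2 k))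

variable [SigmaFiniteFiltration P F]

lemma integral_sum_mul_sub_eq_zero {Y : ℕ → Ω → ℝ} (hN : Martingale N F P)
    (hN2 : ∀ k, MemLp (N k) 2 P) (hY : Adapted F Y) (hY2 : ∀ k, MemLp (Y k) 2 P) (n : ℕ) :
    ∫ ω, ∑ k ∈ Finset.range n, Y k ω * (N (k + 1) ω - N k ω) ∂P = 0 := by
  have hint (k : ℕ) : Integrable (fun ω => Y k ω * (N (k + 1) ω - N k ω)) P :=
    (hY2 k).integrable_mul ((hN2 (k + 1)).sub (hN2 k))
  rw [integral_finsetSum _ fun k _ => hint k]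
  exact Finset.sum_eq_zero fun k _ => integral_mul_sub_eq_zero hN k.le_succ (hY k) (hint k)

lemma integral_partialSups_abs_sq_le (hN : Martingale N F P) (hN2 : ∀ k, MemLp (N k) 2 P)
    (n : ℕ) :
    ∫ ω, partialSups (fun k => |N k ω|) n ^ 2 ∂P ≤ 4 * ∫ ω, N n ω ^ 2 ∂P := by
  have hadapted : Adapted F N := fun k => (hN.stronglyAdapted k).measurable
  have hsum := integrable_sum_mul_sub hN2 (memLp_signedRunningMax hadapted hN2) n
  calc ∫ ω, partialSups (fun k => |N k ω|) n ^ 2 ∂P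
      ≤ ∫ ω, (4 * N n ω ^ 2 - 4 * ∑ k ∈ Finset.range n,
          signedRunningMax (fun j => N j ω) k * (N (k + 1) ω - N k ω)) ∂P :=
        integral_mono (memLp_partialSups (fun k => (hN2 k).abs) n).integrable_sq
          (((hN2 n).integrable_sq.const_mul 4).sub (hsum.const_mul 4))
          fun ω => partialSups_abs_sq_le (fun k => N k ω) n
    _ = 4 * ∫ ω, N n ω ^ 2 ∂P := by
        rw [integral_sub ((hN2 n).integrable_sq.const_mul 4) (hsum.const_mul 4),
          integral_const_mul, integral_const_mul, integral_sum_mul_sub_eq_zero hN hN2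
            (adapted_signedRunningMax hadapted) (memLp_signedRunningMax hadapted hN2),
          mul_zero, sub_zero]

lemma integral_partialSups_le_of_le_add_mul_sq {W : ℕ → Ω → ℝ} {G : Ω → ℝ} {c : ℝ}
    (hN : Martingale N F P) (hN2 : ∀ k, MemLp (N k) 2 P) (hG : Integrable G P) (hc : 0 ≤ c)
    (hW0 : ∀ k ω, 0 ≤ W k ω) (hWN : ∀ k ω, W k ω ≤ G ω + c * N k ω ^ 2) (n : ℕ) :
    ∫ ω, partialSups (fun k => W k ω) n ∂P ≤ ∫ ω, G ω ∂P + c * (4 * ∫ ω, N n ω ^ 2 ∂P) := by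
  have hmax : Integrable (fun ω => c * partialSups (fun k => |N k ω|) n ^ 2) P :=
    (memLp_partialSups (fun k => (hN2 k).abs) n).integrable_sq.const_mul c
  have hle {k : ℕ} (hk : k ≤ n) (ω : Ω) :
      W k ω ≤ G ω + c * partialSups (fun k => |N k ω|) n ^ 2 := by
    refine (hWN k ω).trans ?_
    rw [← sq_abs]
    gcongr
    exact le_partialSups_of_le (fun k => |N k ω|) hk
  calc ∫ ω, partialSups (fun k => W k ω) n ∂P
      ≤ ∫ ω, (G ω + c * partialSups (fun k => |N k ω|) n ^ 2) ∂P := by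
        refine integral_mono_of_nonneg (ae_of_all _ fun ω => (hW0 0 ω).trans
          (le_partialSups_of_le (fun k => W k ω) n.zero_le)) (hG.add hmax) (ae_of_all _ fun ω => ?_)
        exact partialSups_le _ _ _ fun k hk => hle hk ω
    _ = ∫ ω, G ω ∂P + c * ∫ ω, partialSups (fun k => |N k ω|) n ^ 2 ∂P := by
        rw [integral_add hG hmax, integral_const_mul]
    _ ≤ ∫ ω, G ω ∂P + c * (4 * ∫ ω, N n ω ^ 2 ∂P) := by
        gcongr
        exact integral_partialSups_abs_sq_le hN hN2 n

lemma integral_sq_le_of_abs_le_of_sum_abs_sub_le {X : ℕ → Ω → ℝ} {S R : Ω → ℝ} {n : ℕ}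
    (hN : Martingale N F P) (hN2 : ∀ k, MemLp (N k) 2 P) (hX : Adapted F X)
    (hS : MemLp S 2 P) (hXS : ∀ k ω, |X k ω| ≤ S ω) (hR : MemLp R 2 P)
    (hNX : ∀ ω, ∑ k ∈ Finset.range n,
      |(N (k + 1) ω - X (k + 1) ω) - (N k ω - X k ω)| ≤ R ω) :
    ∫ ω, N n ω ^ 2 ∂P ≤ ∫ ω, N 0 ω ^ 2 ∂P + ∫ ω, S ω ^ 2 ∂P + 2 * ∫ ω, S ω * R ω ∂P +
      ∫ ω, ∑ k ∈ Finset.range n, ((N (k + 1) ω - X (k + 1) ω) - (N k ω - X k ω)) ^ 2 ∂P := by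
  have hX2 (k : ℕ) : MemLp (X k) 2 P :=
    hS.mono' ((hX k).mono (F.le k) le_rfl).aestronglyMeasurable (ae_of_all _ (hXS k))
  have hY : Adapted F fun k ω => N k ω - X k ω := fun k =>
    (hN.stronglyAdapted k).measurable.sub (hX k)
  have hY2 (k : ℕ) : MemLp (fun ω => N k ω - X k ω) 2 P := (hN2 k).sub (hX2 k)
  have hSR : Integrable (fun ω => 2 * (S ω * R ω)) P := (hS.integrable_mul hR).const_mul 2
  have hqv : Integrable (fun ω => ∑ k ∈ Finset.range n,
      ((N (k + 1) ω - X (k + 1) ω) - (N k ω - X k ω)) ^ 2) P :=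
    integrable_finsetSum _ fun k _ => ((hY2 (k + 1)).sub (hY2 k)).integrable_sq
  have hsum := (integrable_sum_mul_sub hN2 hY2 n).const_mul 2
  have hNS := (hN2 0).integrable_sq.add hS.integrable_sq
  refine (integral_mono (hN2 n).integrable_sq (((hNS.add hSR).add hqv).add hsum) fun ω =>
    sq_le_of_abs_le_of_sum_abs_sub_le (w := fun k => N k ω) (fun k => hXS k ω) (hNX ω)).trans_eq ?_
  rw [integral_add' ((hNS.add hSR).add hqv) hsum, integral_add' (hNS.add hSR) hqv,
    integral_add' hNS hSR, integral_add' (hN2 0).integrable_sq hS.integrable_sq,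
    integral_const_mul, integral_const_mul, integral_sum_mul_sub_eq_zero hN hN2 hY hY2, mul_zero,
    add_zero]

end Discrete

section Sampling

variable {ι κ : Type*} [Preorder ι] [Preorder κ] {τ : κ → ι}

/-- The filtration `F` observed along a monotone family of times `τ`. -/
def sampledFiltration (F : Filtration ι m) (hτ : Monotone τ) : Filtration κ m where
  seq k := F (τ k)
  mono' _ _ h := F.mono (hτ h)
  le' k := F.le (τ k)

variable {F : Filtration ι m}

instance sigmaFiniteFiltration_sampledFiltration [SigmaFiniteFiltration P F] (hτ : Monotone τ) :
    SigmaFiniteFiltration P (sampledFiltration F hτ) :=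
  ⟨fun k => inferInstanceAs (SigmaFinite (P.trim (F.le (τ k))))⟩

lemma martingale_sampledFiltration {E : Type*} [NormedAddCommGroup E] [NormedSpace ℝ E]
    [CompleteSpace E] {N : ι → Ω → E} (hN : Martingale N F P) (hτ : Monotone τ) :
    Martingale (fun k => N (τ k)) (sampledFiltration F hτ) P :=
  ⟨fun k => hN.stronglyAdapted (τ k), fun _ _ h => hN.condExp_ae_eq (hτ h)⟩

end Sampling

section ContinuousTime

lemma measurable_iSup_of_continuous {α : Type*} [TopologicalSpace α]
    [TopologicalSpace.SeparableSpace α] {f : α → Ω → ℝ} (hf : ∀ t, Measurable (f t))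
    (hc : ∀ ω, Continuous fun t => f t ω) : Measurable fun ω => ⨆ t, f t ω := by
  obtain ⟨s, hs, hdense⟩ := TopologicalSpace.exists_countable_dense α
  have := hs.to_subtype
  simp only [← fun ω => hdense.ciSup' (hc ω)]
  exact Measurable.iSup fun t : s => hf t

lemma integrable_iSup_sq_sub {α : Type*} [TopologicalSpace α] [CompactSpace α] [Nonempty α]
    [TopologicalSpace.SeparableSpace α] {f g : α → Ω → ℝ} (hf : ∀ t, Measurable (f t))
    (hg : ∀ t, Measurable (g t)) (hfc : ∀ ω, Continuous fun t => f t ω)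
    (hgc : ∀ ω, Continuous fun t => g t ω) (hfi : Integrable (fun ω => ⨆ t, f t ω ^ 2) P)
    (hgi : Integrable (fun ω => ⨆ t, g t ω ^ 2) P) :
    Integrable (fun ω => ⨆ t, (f t ω - g t ω) ^ 2) P := by
  have hbound {h : α → Ω → ℝ} (hc : ∀ ω, Continuous fun t => h t ω) (t : α) (ω : Ω) :
      h t ω ^ 2 ≤ ⨆ s, h s ω ^ 2 :=
    le_ciSup (f := fun s => h s ω ^ 2) (isCompact_range ((hc ω).pow 2)).bddAbove t
  refine ((hfi.const_mul 2).add (hgi.const_mul 2)).mono'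
    (measurable_iSup_of_continuous (fun t => ((hf t).sub (hg t)).pow_const 2)
      fun ω => ((hfc ω).sub (hgc ω)).pow 2).aestronglyMeasurable (ae_of_all _ fun ω => ?_)
  rw [Real.norm_of_nonneg (Real.iSup_nonneg fun t => sq_nonneg _)]
  refine ciSup_le fun t => ?_
  simp only [Pi.add_apply]
  linarith [hbound hfc t ω, hbound hgc t ω, add_sq_le (a := f t ω) (b := g t ω),
    sq_nonneg (f t ω + g t ω)]

variable {F : Filtration unitInterval m} [SigmaFiniteFiltration P F] {N : unitInterval → Ω → ℝ}

theorem integral_sq_one_le_of_eVariationOn_le {X : unitInterval → Ω → ℝ} {S R : Ω → ℝ}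
    (hN : Martingale N F P) (hN2 : ∀ t, MemLp (N t) 2 P) (hX : Adapted F X)
    (hNX : ∀ ω, Continuous fun t => N t ω - X t ω)
    (hS : MemLp S 2 P) (hXS : ∀ t ω, |X t ω| ≤ S ω) (hR : MemLp R 2 P) (hR0 : ∀ ω, 0 ≤ R ω)
    (hvar : ∀ ω, eVariationOn (fun t => N t ω - X t ω) Set.univ ≤ ENNReal.ofReal (R ω)) :
    ∫ ω, N 1 ω ^ 2 ∂P ≤
      ∫ ω, N 0 ω ^ 2 ∂P + ∫ ω, S ω ^ 2 ∂P + 2 * ∫ ω, S ω * R ω ∂P := by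
  set Y : unitInterval → Ω → ℝ := fun t ω => N t ω - X t ω
  set Q : ℕ → Ω → ℝ := fun n ω =>
    ∑ k ∈ Finset.range (n + 1), (Y (uniformGrid n (k + 1)) ω - Y (uniformGrid n k) ω) ^ 2
  have hYm (t : unitInterval) : Measurable (Y t) :=
    ((hN.stronglyAdapted t).measurable.sub (hX t)).mono (F.le t) le_rfl
  have hYR (n : ℕ) (ω : Ω) : ∑ k ∈ Finset.range (n + 1),
      |Y (uniformGrid n (k + 1)) ω - Y (uniformGrid n k) ω| ≤ R ω :=
    sum_abs_sub_le_of_eVariationOn_le (hR0 ω) (hvar ω) (monotone_uniformGrid n) (n + 1)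
  have hstep (n : ℕ) : ∫ ω, N 1 ω ^ 2 ∂P ≤
      ∫ ω, N 0 ω ^ 2 ∂P + ∫ ω, S ω ^ 2 ∂P + 2 * ∫ ω, S ω * R ω ∂P + ∫ ω, Q n ω ∂P := by
    simpa only [uniformGrid_zero, uniformGrid_add_one_self] using
      integral_sq_le_of_abs_le_of_sum_abs_sub_le
        (martingale_sampledFiltration hN (monotone_uniformGrid n)) (fun k => hN2 _)
        (fun k => hX (uniformGrid n k)) hS (fun k => hXS _) hR (hYR n)
  have hlim : Tendsto (fun n => ∫ ω, Q n ω ∂P) atTop (𝓝 0) := by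
    rw [← integral_zero Ω ℝ (μ := P)]
    refine tendsto_integral_of_dominated_convergence (fun ω => R ω ^ 2) (fun n => ?_)
      hR.integrable_sq (fun n => ae_of_all _ fun ω => ?_) (ae_of_all _ fun ω => ?_)
    · exact (Finset.measurable_fun_sum _ fun k _ =>
        ((hYm _).sub (hYm _)).pow_const 2).aestronglyMeasurable
    · rw [Real.norm_of_nonneg (Finset.sum_nonneg fun _ _ => sq_nonneg _)]
      exact sum_sq_le_sq_of_sum_abs_le (hYR n ω)
    · exact tendsto_sum_sq_sub_of_sum_abs_sub_le
        (CompactSpace.uniformContinuous_of_continuous (hNX ω))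
        tendsto_one_div_add_atTop_nhds_zero_nat dist_uniformGrid_succ_le fun n => hYR n ω
  exact ge_of_tendsto' (by simpa using hlim.const_add _) hstep

theorem integral_iSup_le_of_le_add_mul_sq {W : unitInterval → Ω → ℝ} {G H : Ω → ℝ} {c : ℝ}
    (hN : Martingale N F P) (hN2 : ∀ t, MemLp (N t) 2 P) (hW : ∀ t, Measurable (W t))
    (hWc : ∀ ω, Continuous fun t => W t ω) (hW0 : ∀ t ω, 0 ≤ W t ω) (hH : Integrable H P)
    (hWH : ∀ t ω, W t ω ≤ H ω) (hG : Integrable G P) (hc : 0 ≤ c)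
    (hWN : ∀ t ω, W t ω ≤ G ω + c * N t ω ^ 2) :
    ∫ ω, ⨆ t, W t ω ∂P ≤ ∫ ω, G ω ∂P + c * (4 * ∫ ω, N 1 ω ^ 2 ∂P) := by
  have hstep (n : ℕ) : ∫ ω, partialSups (fun k => W (uniformGrid n k) ω) (n + 1) ∂P ≤
      ∫ ω, G ω ∂P + c * (4 * ∫ ω, N 1 ω ^ 2 ∂P) := by
    simpa only [uniformGrid_add_one_self] using integral_partialSups_le_of_le_add_mul_sq
      (martingale_sampledFiltration hN (monotone_uniformGrid n)) (fun k => hN2 _) hG hc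
      (fun k => hW0 (uniformGrid n k)) (fun k => hWN _) (n + 1)
  refine le_of_tendsto' (tendsto_integral_of_dominated_convergence H (fun n => ?_) hH
    (fun n => ae_of_all _ fun ω => ?_)
    (ae_of_all _ fun ω => tendsto_partialSups_uniformGrid (hWc ω))) hstep
  · exact (measurable_partialSups fun k _ => hW _).aestronglyMeasurable
  · rw [Real.norm_of_nonneg ((hW0 _ ω).trans
      (le_partialSups_of_le (fun k => W (uniformGrid n k) ω) (n + 1).zero_le))]
    exact partialSups_le _ _ _ fun k _ => hWH _ ω

variable {X : unitInterval → Ω → ℝ} {Z : Ω → ℝ}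

lemma integral_iSup_sq_add_sub_le {H : Ω → ℝ} (hN : Martingale N F P)
    (hN2 : ∀ t, MemLp (N t) 2 P) (hX : Adapted F X)
    (hc : ∀ ω, Continuous fun t => X 0 ω + N t ω - X t ω) (hH : MemLp H 2 P)
    (hXH : ∀ t ω, |X 0 ω + N t ω - X t ω| ≤ H ω) (hZ : Integrable Z P)
    (hXZ : ∀ t ω, X t ω ^ 2 ≤ Z ω) :
    ∫ ω, ⨆ t, (X 0 ω + N t ω - X t ω) ^ 2 ∂P ≤ 6 * ∫ ω, Z ω ∂P + 12 * ∫ ω, N 1 ω ^ 2 ∂P := by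
  have hXm (t : unitInterval) : Measurable (X t) := (hX t).mono (F.le t) le_rfl
  have hNm (t : unitInterval) : Measurable (N t) :=
    (hN.stronglyAdapted t).measurable.mono (F.le t) le_rfl
  have hdom (t : unitInterval) (ω : Ω) :
      (X 0 ω + N t ω - X t ω) ^ 2 ≤ 6 * Z ω + 3 * N t ω ^ 2 := by
    nlinarith [hXZ 0 ω, hXZ t ω, sq_nonneg (X 0 ω - N t ω), sq_nonneg (X 0 ω + X t ω),
      sq_nonneg (N t ω + X t ω)]
  have hmax := integral_iSup_le_of_le_add_mul_sq
    (W := fun t ω => (X 0 ω + N t ω - X t ω) ^ 2) hN hN2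
    (fun t => (((hXm 0).add (hNm t)).sub (hXm t)).pow_const 2) (fun ω => (hc ω).pow 2)
    (fun _ _ => sq_nonneg _) hH.integrable_sq
    (fun t ω => sq_le_sq' (abs_le.1 (hXH t ω)).1 (abs_le.1 (hXH t ω)).2) (hZ.const_mul 6)
    zero_le_three hdom
  rw [integral_const_mul] at hmax
  linarith

variable {A B : unitInterval → Ω → ℝ}

lemma integral_sq_one_le_of_eq_add_sub (hN : Martingale N F P) (hN2 : ∀ t, MemLp (N t) 2 P)
    (hX : Adapted F X) (hA : ∀ ω, Monotone fun t => A t ω) (hB : ∀ ω, Monotone fun t => B t ω)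
    (hAB : ∀ ω, Continuous fun t => A t ω - B t ω) (hA0 : ∀ ω, A 0 ω = 0)
    (hB0 : ∀ ω, B 0 ω = 0) (hA2 : MemLp (A 1) 2 P) (hB2 : MemLp (B 1) 2 P)
    (hXN : ∀ t ω, X t ω = X 0 ω + N t ω - (A t ω - B t ω))
    (hZ : Integrable Z P) (hXZ : ∀ t ω, X t ω ^ 2 ≤ Z ω) :
    ∫ ω, N 1 ω ^ 2 ∂P ≤ ∫ ω, Z ω ∂P +
      2 * (√(∫ ω, Z ω ∂P) * (√(∫ ω, A 1 ω ^ 2 ∂P) + √(∫ ω, B 1 ω ^ 2 ∂P))) := by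
  have hN0 (ω : Ω) : N 0 ω = 0 := by linarith [hXN 0 ω, hA0 ω, hB0 ω]
  have hA1 (ω : Ω) : 0 ≤ A 1 ω := hA0 ω ▸ hA ω zero_le_one
  have hB1 (ω : Ω) : 0 ≤ B 1 ω := hB0 ω ▸ hB ω zero_le_one
  have hNX (t : unitInterval) (ω : Ω) : N t ω - X t ω = A t ω - (B t ω + X 0 ω) := by
    linarith [hXN t ω]
  have hsqrt (ω : Ω) : √(Z ω) ^ 2 = Z ω := Real.sq_sqrt ((sq_nonneg _).trans (hXZ 0 ω))
  have hS : MemLp (fun ω => √(Z ω)) 2 P :=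
    (memLp_two_iff_integrable_sq
      (Real.continuous_sqrt.comp_aestronglyMeasurable hZ.aestronglyMeasurable)).2 (by simpa [hsqrt])
  have henergy := integral_sq_one_le_of_eVariationOn_le hN hN2 hX
    (fun ω => by
      simp only [hNX, ← sub_sub]
      exact (hAB ω).sub continuous_const) hS
    (fun t ω => Real.abs_le_sqrt (hXZ t ω)) (hA2.add hB2) (fun ω => add_nonneg (hA1 ω) (hB1 ω))
    fun ω => by
      simpa [hNX, hA0, hB0] using
        eVariationOn_univ_sub_le_of_monotone (hA ω) ((hB ω).add_const (X 0 ω))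
          (fun _ => unitInterval.nonneg') fun _ => unitInterval.le_one'
  have hCS {f : Ω → ℝ} (hf : ∀ ω, 0 ≤ f ω) (hf2 : MemLp f 2 P) :
      ∫ ω, √(Z ω) * f ω ∂P ≤ √(∫ ω, Z ω ∂P) * √(∫ ω, f ω ^ 2 ∂P) := by
    simpa only [hsqrt] using integral_mul_le_sqrt_mul_sqrt
      (ae_of_all _ fun ω => (Z ω).sqrt_nonneg) (ae_of_all _ hf) hS hf2
  have hsplit : ∫ ω, √(Z ω) * (A 1 + B 1) ω ∂P =
      ∫ ω, √(Z ω) * A 1 ω ∂P + ∫ ω, √(Z ω) * B 1 ω ∂P := by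
    simp only [Pi.add_apply, mul_add]
    exact integral_add (hS.integrable_mul hA2) (hS.integrable_mul hB2)
  simp only [hN0, hsqrt, hsplit, zero_pow two_ne_zero, integral_zero, zero_add] at henergy
  linarith [hCS hA1 hA2, hCS hB1 hB2]

end ContinuousTime

end Probability

theorem stmt_15_general {Ω : Type*} {m : MeasurableSpace Ω} {P : Measure Ω}
    {F : Filtration unitInterval m} [SigmaFiniteFiltration P F] {N X A B : unitInterval → Ω → ℝ}
    {Z : Ω → ℝ} (hN : Martingale N F P) (hN2 : ∀ t, MemLp (N t) 2 P)
    (hX : Adapted F X) (hA : ∀ ω, Monotone fun t => A t ω) (hB : ∀ ω, Monotone fun t => B t ω)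
    (hAB : ∀ ω, Continuous fun t => A t ω - B t ω) (hA0 : ∀ ω, A 0 ω = 0)
    (hB0 : ∀ ω, B 0 ω = 0) (hA2 : MemLp (A 1) 2 P) (hB2 : MemLp (B 1) 2 P)
    (hXN : ∀ t ω, X t ω = X 0 ω + N t ω - (A t ω - B t ω))
    (hZ : Integrable Z P) (hXZ : ∀ t ω, X t ω ^ 2 ≤ Z ω) :
    ∫ ω, N 1 ω ^ 2 ∂P + ∫ ω, ⨆ t, (A t ω - B t ω) ^ 2 ∂P ≤
      26 * (∫ ω, Z ω ∂P +
        √(∫ ω, Z ω ∂P) * (√(∫ ω, A 1 ω ^ 2 ∂P) + √(∫ ω, B 1 ω ^ 2 ∂P))) := by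
  have hZ0 : 0 ≤ ∫ ω, Z ω ∂P := integral_nonneg fun ω => (sq_nonneg _).trans (hXZ 0 ω)
  have henergy := integral_sq_one_le_of_eq_add_sub hN hN2 hX hA hB hAB hA0 hB0 hA2 hB2 hXN hZ hXZ
  have hsub (t : unitInterval) (ω : Ω) : X 0 ω + N t ω - X t ω = A t ω - B t ω := by
    rw [hXN t ω]; ring
  have hsup := integral_iSup_sq_add_sub_le (H := A 1 + B 1) hN hN2 hX
    (by simpa only [hsub] using hAB) (hA2.add hB2) (fun t ω => ?_) hZ hXZ
  · simp only [hsub] at hsup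
    linarith
  · have hAt := hA ω (unitInterval.nonneg' (t := t))
    have hA1 := hA ω (unitInterval.le_one' (t := t))
    have hBt := hB ω (unitInterval.nonneg' (t := t))
    have hB1 := hB ω (unitInterval.le_one' (t := t))
    simp only [hA0, hB0] at hAt hBt hA1 hB1
    rw [hsub, Pi.add_apply]
    exact abs_le.2 ⟨by linarith, by linarith⟩

end

/-- there is a universal constant `C` such that for any two decompositions
`M^i_t = M₀^i + N^i_t − K^i_t` (with `N^i` square-integrable continuous martingales
started at `0` and `K^i` continuous nondecreasing adapted square-integrable processes
started at `0`), writing `δM, δN, δK` for the differences,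
`E[(δN₁)²] + E[sup_t (δK_t)²] ≤ C (E[sup_t (δM_t)²] + E[sup_t (δM_t)²]^{1/2}
  (E[(K₁¹)²]^{1/2} + E[(K₁²)²]^{1/2}))`. -/
theorem stmt_15 : ∃ C : ℝ, 0 < C ∧
    ∀ (Ω : Type) (𝒢 : MeasurableSpace Ω) (P : Measure Ω), IsProbabilityMeasure P →
    ∀ (F : Filtration unitInterval 𝒢)
      (M₀ : Fin 2 → Ω → ℝ) (N K M : Fin 2 → unitInterval → Ω → ℝ),
      (∀ i, Measurable[F 0] (M₀ i)) →
      (∀ i, Integrable (fun ω => M₀ i ω ^ 2) P) →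
      (∀ i, Martingale (N i) F P) →
      (∀ i ω, Continuous fun t => N i t ω) →
      (∀ i ω, N i 0 ω = 0) →
      (∀ i t, Integrable (fun ω => N i t ω ^ 2) P) →
      (∀ i, Adapted F (K i)) →
      (∀ i ω, Continuous fun t => K i t ω) →
      (∀ i ω, Monotone fun t => K i t ω) →
      (∀ i ω, K i 0 ω = 0) →
      (∀ i, Integrable (fun ω => K i 1 ω ^ 2) P) →
      (∀ i t ω, M i t ω = M₀ i ω + N i t ω - K i t ω) →
      (∀ i, Integrable (fun ω => ⨆ t : unitInterval, M i t ω ^ 2) P) →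
      (∫ ω, (N 0 1 ω - N 1 1 ω) ^ 2 ∂P) +
          (∫ ω, (⨆ t : unitInterval, (K 0 t ω - K 1 t ω) ^ 2) ∂P) ≤
        C * ((∫ ω, (⨆ t : unitInterval, (M 0 t ω - M 1 t ω) ^ 2) ∂P) +
          Real.sqrt (∫ ω, (⨆ t : unitInterval, (M 0 t ω - M 1 t ω) ^ 2) ∂P) *
            (Real.sqrt (∫ ω, K 0 1 ω ^ 2 ∂P) + Real.sqrt (∫ ω, K 1 1 ω ^ 2 ∂P))) := by
  refine ⟨26, by norm_num, ?_⟩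
  intro Ω 𝒢 P _ F M₀ N K M hM₀ _ hN hNc hN0 hN2 hK hKc hKm hK0 hK2 hM hMi
  have hMF (i : Fin 2) : Adapted F (M i) := fun t => by
    simp only [funext (hM i t)]
    exact (((hM₀ i).mono (F.mono zero_le) le_rfl).add ((hN i).stronglyAdapted t).measurable).sub
      (hK i t)
  have hMm (i : Fin 2) (t : unitInterval) : Measurable (M i t) := (hMF i t).mono (F.le t) le_rfl
  have hMc (i : Fin 2) (ω : Ω) : Continuous fun t => M i t ω := by
    simp only [hM]
    exact (continuous_const.add (hNc i ω)).sub (hKc i ω)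
  have hNL (i : Fin 2) (t : unitInterval) : MemLp (N i t) 2 P :=
    (memLp_two_iff_integrable_sq ((hN i).integrable t).aestronglyMeasurable).2 (hN2 i t)
  have hKL (i : Fin 2) : MemLp (K i 1) 2 P := (memLp_two_iff_integrable_sq
    ((hK i 1).mono (F.le 1) le_rfl).aestronglyMeasurable).2 (hK2 i)
  exact stmt_15_general (X := M 0 - M 1) ((hN 0).sub (hN 1)) (fun t => (hNL 0 t).sub (hNL 1 t))
    (fun t => (hMF 0 t).sub (hMF 1 t)) (hKm 0) (hKm 1) (fun ω => (hKc 0 ω).sub (hKc 1 ω))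
    (hK0 0) (hK0 1) (hKL 0) (hKL 1)
    (fun t ω => by simp only [Pi.sub_apply, hM, hN0, hK0]; ring)
    (integrable_iSup_sq_sub (hMm 0) (hMm 1) (hMc 0) (hMc 1) (hMi 0) (hMi 1))
    fun t ω => le_ciSup (isCompact_range (((hMc 0 ω).sub (hMc 1 ω)).pow 2)).bddAbove t
end
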